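/- Let A be a filtered ring, B ⊆ A₀ a subring, and M a filtered A-module that is finitely generated as an A-module. Then M and the associated graded module gr M = ⊕_{n≥0} Mₙ/M_{n−1} have the same length as B-modules (as elements of ℕ ∪ {∞}). -/

import Mathlib

open DirectSum

/-!
Length is additive in short exact sequences, so the length of `M_{n-1}` is the sum of the lengths
of `M_i / M_{i-1}` over `i < n`. Length also commutes with directed unions of submodules: if the
supremum of the lengths is finite, a member attaining it contains all the others. Since `M` is the
union of the `M_n` and `gr M` is the directed union of its finite partial sums, both lengths are
the supremum over `n` of these sums.
-/

section Length

variable {R M : Type*} [Ring R] [AddCommGroup M] [Module R M]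

theorem length_eq_length_add_length_quotient_comap {P N : Submodule R M} (hPN : P ≤ N) :
    Module.length R N = Module.length R P + Module.length R (N ⧸ P.comap N.subtype) := by
  refine Module.length_eq_add_of_exact (Submodule.inclusion hPN) (Submodule.mkQ _)
    (Submodule.inclusion_injective hPN) (Submodule.mkQ_surjective _) ?_
  rw [LinearMap.exact_iff, Submodule.ker_mkQ, Submodule.range_inclusion]

theorem length_submodule_mono {P N : Submodule R M} (hPN : P ≤ N) :
    Module.length R P ≤ Module.length R N :=
  Module.length_le_of_injective _ (Submodule.inclusion_injective hPN)

theorem eq_of_le_of_length_le {P N : Submodule R M} (hPN : P ≤ N)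
    (hlen : Module.length R N ≤ Module.length R P) (hP : Module.length R P ≠ ⊤) : P = N := by
  simp only [Module.length_submodule] at hlen hP
  by_contra hne
  exact (Order.height_strictMono (hPN.lt_of_ne hne) hP.lt_top).not_ge hlen

theorem length_iSup_of_directed {ι : Type*} (N : ι → Submodule R M) (hN : Directed (· ≤ ·) N) :
    Module.length R ↥(⨆ i, N i) = ⨆ i, Module.length R (N i) := by
  refine le_antisymm ?_ (iSup_le fun i => length_submodule_mono (le_iSup N i))
  cases isEmpty_or_nonempty ι
  · rw [iSup_of_empty, Module.length_bot]
    exact zero_le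
  by_cases htop : ⨆ i, Module.length R (N i) = ⊤
  · exact htop ▸ le_top
  obtain ⟨m, hm⟩ := ENat.exists_eq_iSup_of_lt_top (Ne.lt_top htop)
  have le_largest (i : ι) : N i ≤ N m := by
    obtain ⟨k, hik, hmk⟩ := hN i m
    have hlen : Module.length R (N k) ≤ Module.length R (N m) :=
      hm ▸ le_iSup (fun j => Module.length R (N j)) k
    exact hik.trans_eq (eq_of_le_of_length_le hmk hlen (hm ▸ htop)).symm
  exact hm ▸ length_submodule_mono (iSup_le le_largest)

end Length

section DirectSum

variable {R ι : Type*} [Ring R] {Q : ι → Type*} [∀ i, AddCommGroup (Q i)]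
  [∀ i, Module R (Q i)]

theorem mem_range_lmk_iff [DecidableEq ι] {s : Finset ι} {x : ⨁ i, Q i} :
    x ∈ LinearMap.range (DirectSum.lmk R ι Q s) ↔ ∀ i ∉ s, x i = 0 := by
  constructor
  · rintro ⟨y, rfl⟩ i hi
    exact DirectSum.mk_apply_of_notMem hi
  · refine fun hx => ⟨fun i => x i, DFinsupp.ext fun i => ?_⟩
    by_cases hi : i ∈ s
    · exact DirectSum.mk_apply_of_mem hi
    · exact (DirectSum.mk_apply_of_notMem hi).trans (hx i hi).symm

variable (Q)

theorem range_lmk_mono [DecidableEq ι] :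
    Monotone fun s => LinearMap.range (DirectSum.lmk R ι Q s) :=
  fun _ _ hst _ hx => mem_range_lmk_iff.2 fun i hi =>
    mem_range_lmk_iff.1 hx i fun his => hi (hst his)

theorem iSup_range_lmk [DecidableEq ι] :
    ⨆ s, LinearMap.range (DirectSum.lmk R ι Q s) = ⊤ := by
  classical
  refine eq_top_iff.2 fun x _ => Submodule.mem_iSup_of_mem (DFinsupp.support x) ?_
  exact mem_range_lmk_iff.2 fun i => DFinsupp.notMem_support_iff.1

theorem length_range_lmk [DecidableEq ι] (s : Finset ι) :
    Module.length R (LinearMap.range (DirectSum.lmk R ι Q s)) =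
      ∑ i ∈ s, Module.length R (Q i) := by
  rw [← (LinearEquiv.ofInjective (DirectSum.lmk R ι Q s) (DFinsupp.mk_injective s)).length_eq]
  exact (Module.length_pi_of_fintype R _).trans
    (Finset.sum_coe_sort s fun i => Module.length R (Q i))

theorem length_directSum :
    Module.length R (⨁ i, Q i) = ⨆ s : Finset ι, ∑ i ∈ s, Module.length R (Q i) := by
  classical
  rw [← Module.length_top, ← iSup_range_lmk Q,
    length_iSup_of_directed _ (range_lmk_mono Q).directed_le]
  simp only [length_range_lmk]

end DirectSum

theorem iSup_sum_finset_nat_eq_iSup_sum_range {α : Type*} [AddCommMonoid α] [CompleteLattice α]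
    [IsOrderedAddMonoid α] [CanonicallyOrderedAdd α] (f : ℕ → α) :
    ⨆ s : Finset ℕ, ∑ i ∈ s, f i = ⨆ n, ∑ i ∈ Finset.range n, f i := by
  refine le_antisymm (iSup_le fun s => ?_) (iSup_le fun n => le_iSup_of_le (Finset.range n) le_rfl)
  obtain ⟨n, hsn⟩ := s.exists_nat_subset_range
  exact le_iSup_of_le n (Finset.sum_le_sum_of_subset hsn)

section Filtration

theorem isFiltration_nat {σ : Type*} [Preorder σ] [OrderBot σ] {F F_lt : ℕ → σ}
    (hF : Monotone F) (h_zero : F_lt 0 = ⊥) (h_succ : ∀ n, F_lt (n + 1) = F n) :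
    IsFiltration F F_lt where
  mono := hF
  is_le {i j} hij := by
    obtain ⟨n, rfl⟩ := Nat.exists_eq_add_one_of_ne_zero (Nat.ne_zero_of_lt hij)
    exact h_succ n ▸ hF (Nat.le_of_lt_succ hij)
  is_sup N j hN := by
    cases j with
    | zero => exact h_zero ▸ bot_le
    | succ n => exact h_succ n ▸ hN n n.lt_succ_self

variable {σ : Type*} [PartialOrder σ] {F F_lt : ℕ → σ}

theorem F_lt_zero [OrderBot σ] (hF : IsFiltration F F_lt) : F_lt 0 = ⊥ :=
  le_bot_iff.1 (hF.is_sup ⊥ 0 fun _ hi => absurd hi (Nat.not_lt_zero _))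

theorem F_lt_succ (hF : IsFiltration F F_lt) (n : ℕ) : F_lt (n + 1) = F n :=
  le_antisymm
    (hF.is_sup _ _ fun _ hi => hF.mono (Nat.le_of_lt_succ hi))
    (hF.is_le n.lt_succ_self)

theorem F_lt_mono (hF : IsFiltration F F_lt) : Monotone F_lt :=
  monotone_nat_of_le_succ fun n => F_lt_succ hF n ▸ IsFiltration.F_lt_le_F F F_lt n

theorem iSup_F_lt {σ : Type*} [CompleteLattice σ] {F F_lt : ℕ → σ} (hF : IsFiltration F F_lt) :
    ⨆ n, F_lt n = ⨆ n, F n := by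
  rw [← sup_iSup_nat_succ F_lt, F_lt_zero hF, bot_sup_eq]
  simp only [F_lt_succ hF]

end Filtration

section AssociatedGraded

variable {R M : Type*} [Ring R] [AddCommGroup M] [Module R M] (F F_lt : ℕ → Submodule R M)

/-- The associated graded module `gr M = ⨁ₙ Mₙ / Mₙ₋₁` of a module with a filtration `F n = Mₙ`.
As in `IsFiltration`, the submodule `Mₙ₋₁` is supplied as `F_lt n`; the quotient is formed inside
`F n`. -/
abbrev AssociatedGraded : Type _ :=
  ⨁ n, F n ⧸ (F_lt n).comap (F n).subtype

variable {F F_lt}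

theorem length_F_lt (hF : IsFiltration F F_lt) (n : ℕ) :
    Module.length R (F_lt n) =
      ∑ i ∈ Finset.range n, Module.length R (F i ⧸ (F_lt i).comap (F i).subtype) := by
  induction n with
  | zero => rw [F_lt_zero hF, Module.length_bot, Finset.sum_range_zero]
  | succ n ih =>
    rw [Finset.sum_range_succ, ← ih, F_lt_succ hF]
    exact length_eq_length_add_length_quotient_comap (IsFiltration.F_lt_le_F F F_lt n)

theorem length_associatedGraded (hF : IsFiltration F F_lt) :
    Module.length R (AssociatedGraded F F_lt) = Module.length R ↥(⨆ n, F n) := by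
  calc Module.length R (AssociatedGraded F F_lt)
      = ⨆ n, ∑ i ∈ Finset.range n, Module.length R (F i ⧸ (F_lt i).comap (F i).subtype) := by
        rw [length_directSum, iSup_sum_finset_nat_eq_iSup_sum_range]
    _ = ⨆ n, Module.length R (F_lt n) := by simp only [length_F_lt hF]
    _ = Module.length R ↥(⨆ n, F n) := by
        rw [← length_iSup_of_directed _ (F_lt_mono hF).directed_le, iSup_F_lt hF]

theorem deformations_stmt3_general (hF : IsFiltration F F_lt) (hexh : ∀ x, ∃ n, x ∈ F n) :
    Order.krullDim (Submodule R M) =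
      Order.krullDim (Submodule R (AssociatedGraded F F_lt)) := by
  have iSup_eq_top : ⨆ n, F n = ⊤ := eq_top_iff.2 fun x _ =>
    (hexh x).elim fun _ => Submodule.mem_iSup_of_mem _
  calc Order.krullDim (Submodule R M)
      = (Module.length R M : WithBot ℕ∞) := (Module.coe_length R M).symm
    _ = (Module.length R (AssociatedGraded F F_lt) : WithBot ℕ∞) := by
        rw [length_associatedGraded hF, iSup_eq_top, Module.length_top]
    _ = Order.krullDim (Submodule R (AssociatedGraded F F_lt)) :=
        Module.coe_length R (AssociatedGraded F F_lt)

end AssociatedGraded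

/-- Let `A` be a filtered ring, `B ⊆ A₀` a subring, and `M` a filtered
`A`-module that is finitely generated over `A`. Then `M` and the associated graded module
`gr M = ⊕ₙ Mₙ/Mₙ₋₁` (with `M₋₁ = 0`) have the same length as `B`-modules.

The length of a module is the Krull dimension of its lattice of submodules (the supremum
of the lengths of chains of submodules), an element of `ℕ∞ ∪ {⊥}`. Each `Mₙ` is a
`B`-submodule of `M` (this is automatic from `B ⊆ A₀` and `Aₙ·Mₘ ⊆ Mₙ₊ₘ`), so the
filtration is recorded as a family of `B`-submodules together with the `A`-module
filtration conditions. -/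
theorem deformations_stmt3
    {A M : Type*} [CommRing A] [AddCommGroup M] [Module A M]
    (B : Subring A)
    -- the filtration on the ring A
    (FA : ℕ → AddSubgroup A)
    (hFAmono : Monotone FA) (hFAone : (1 : A) ∈ FA 0)
    (hFAmul : ∀ (n m : ℕ), ∀ a ∈ FA n, ∀ b ∈ FA m, a * b ∈ FA (n + m))
    (hFAexh : ∀ a : A, ∃ n, a ∈ FA n)
    -- B is a subring of A₀
    (hB : (B : Set A) ⊆ FA 0)
    -- the filtration on the module M (each piece is in particular a B-submodule)
    (FM : ℕ → Submodule ↥B M)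
    (hFMmono : Monotone FM)
    (hFMsmul : ∀ (n m : ℕ), ∀ a ∈ FA n, ∀ x ∈ FM m, a • x ∈ FM (n + m))
    (hFMexh : ∀ x : M, ∃ n, x ∈ FM n)
    -- M is a finitely generated A-module
    (hfg : Module.Finite A M) :
    Order.krullDim (Submodule ↥B M) =
      Order.krullDim (Submodule ↥B
        (⨁ n : ℕ, (↥(FM n) ⧸ Submodule.comap (FM n).subtype
          (match n with
            | 0 => (⊥ : Submodule ↥B M)
            | Nat.succ m => FM m)))) := by
  exact deformations_stmt3_general (isFiltration_nat hFMmono rfl fun _ => rfl) hFMexh
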